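/- Let P be any prior distribution over the policy class Π and let Q̂_n = argmax_{Q ∈ Δ_Π} { ṽ_n(Q) - KL(Q‖P)/(2γn) } be the Gibbs posterior of PAC-Bayesian PIWO-IX. With probability at least 1-δ, simultaneously for every comparator distribution Q* ∈ Δ_Π, v(Q*) - v(Q̂_n) ≤ (KL(Q*‖P) + log(1/δ))/(γn) + 2γ·C_γ(Q*). -/

import Mathlib

/-!
The IX estimator has one-sided exponential moments at scale `2γ`. For one observation and a fixed
policy `π`, with `r̃` the IX term,
* `E exp (2γ (r̃ - v(π))) ≤ 1` (`lintegral_exp_ix_le_one`), because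
  `exp (2γz/(m+γ)) ≤ 1 + 2γz/m` for `z ∈ [0,1]`, so the importance weight cancels;
* `E exp (2γ (v(π) - r̃ - 2γ C_γ(π))) ≤ 1` (`lintegral_exp_neg_ix_le_one`), because
  `exp (-y) ≤ 1 - y + y²/2`, the bias of `r̃` is `γ C_γ(π)` and its second moment is at most
  `C_γ(π)`.

Taking products over the sample and averaging over the prior gives two nonnegative statistics
`W₁`, `W₂` of the data with expectation at most one (`lintegral_mixExp_le_one`). The
Donsker–Varadhan inequality (`donsker_varadhan`) turns them into bounds valid for all posteriors
at once:
`2γn (ṽ_n(Q) - v(Q)) ≤ KL(Q‖P) + log W₁` and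
`2γn (v(Q) - ṽ_n(Q) - 2γ C_γ(Q)) ≤ KL(Q‖P) + log W₂`.
The first is used at the Gibbs posterior, the second at the comparator, and the optimality of the
Gibbs posterior links them; the total excess is `(log W₁ + log W₂)/(2γn)`.

A union bound over the two events would give `log (2/δ)`. Instead Markov's inequality is applied
once, to `W₁ + W₂`: outside an event of probability `δ`, `W₁ + W₂ ≤ 2/δ`, hence `W₁ W₂ ≤ 1/δ²` by
AM–GM, and `log W₁ + log W₂ ≤ 2 log (1/δ)`.
-/


open MeasureTheory ProbabilityTheory

/-- A stochastic contextual bandit instance: context distribution `ν`, behavior policy `μb`,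
reward kernel `rker` supported on `[0,1]`, and mean reward function `r`. -/
structure CBSetup (𝓧 𝓐 : Type*) [MeasurableSpace 𝓧] [Fintype 𝓐] [MeasurableSpace 𝓐] where
  /-- the context distribution -/
  ν : Measure 𝓧
  ν_prob : IsProbabilityMeasure ν
  /-- the behavior policy `μ(a|x)` -/
  μb : 𝓧 → 𝓐 → ℝ
  μb_nonneg : ∀ x a, 0 ≤ μb x a
  μb_sum_one : ∀ x, ∑ a, μb x a = 1
  μb_meas : ∀ a, Measurable fun x => μb x a
  /-- the reward kernel `p(·|x,a)` -/
  rker : 𝓧 → 𝓐 → Measure ℝ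
  rker_prob : ∀ x a, IsProbabilityMeasure (rker x a)
  rker_supp : ∀ x a, rker x a (Set.Icc (0:ℝ) 1)ᶜ = 0
  rker_meas : ∀ a, Measurable fun x => rker x a
  /-- the mean reward `r(x,a)` -/
  r : 𝓧 → 𝓐 → ℝ
  r_def : ∀ x a, r x a = ∫ ρ, ρ ∂(rker x a)
  r_meas : ∀ a, Measurable fun x => r x a

variable {𝓧 𝓐 : Type*} [MeasurableSpace 𝓧] [Fintype 𝓐] [MeasurableSpace 𝓐]
  [MeasurableSingletonClass 𝓐]

/-- The law of a single observation `(X, A, R)` with `X ~ ν`, `A ~ μ(·|X)`, `R ~ p(·|X,A)`. -/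
noncomputable def obsLaw (S : CBSetup 𝓧 𝓐) : Measure (𝓧 × 𝓐 × ℝ) :=
  S.ν.bind fun x => Measure.sum fun a =>
    ENNReal.ofReal (S.μb x a) • (S.rker x a).map fun ρ => (x, a, ρ)

/-- The law of the i.i.d. dataset `(X_t, A_t, R_t)_{t=1}^n`. -/
noncomputable def dataLaw (S : CBSetup 𝓧 𝓐) (n : ℕ) : Measure (Fin n → 𝓧 × 𝓐 × ℝ) :=
  Measure.pi fun _ : Fin n => obsLaw S

/-- A (stochastic, measurable) policy: a map from contexts to distributions over actions. -/
def IsPolicy (π : 𝓧 → 𝓐 → ℝ) : Prop :=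
  (∀ x a, 0 ≤ π x a) ∧ (∀ x, ∑ a, π x a = 1) ∧ (∀ a, Measurable fun x => π x a)

/-- The value `v(π) = E[Σ_a π(a|X) r(X,a)]` of a policy. -/
noncomputable def pval (S : CBSetup 𝓧 𝓐) (π : 𝓧 → 𝓐 → ℝ) : ℝ :=
  ∫ x, ∑ a, π x a * S.r x a ∂S.ν

/-- The smoothed coverage ratio `C_γ(π) = E[Σ_a π(a|X) r(X,a)/(μ(a|X)+γ)]`. -/
noncomputable def covγ (S : CBSetup 𝓧 𝓐) (γ : ℝ) (π : 𝓧 → 𝓐 → ℝ) : ℝ :=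
  ∫ x, ∑ a, π x a * S.r x a / (S.μb x a + γ) ∂S.ν

/-- The IX reward estimate `r̃(π) = π(A|X) R / (μ(A|X) + γ)` for one observation `ω = (X,A,R)`. -/
noncomputable def ixTerm (S : CBSetup 𝓧 𝓐) (γ : ℝ) (π : 𝓧 → 𝓐 → ℝ) (ω : 𝓧 × 𝓐 × ℝ) : ℝ :=
  π ω.1 ω.2.1 * ω.2.2 / (S.μb ω.1 ω.2.1 + γ)

/-- The IX value estimator `ṽ_n(π) = (1/n) Σ_t π(A_t|X_t) R_t / (μ(A_t|X_t) + γ)`. -/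
noncomputable def ixEst (S : CBSetup 𝓧 𝓐) (γ : ℝ) {n : ℕ} (π : 𝓧 → 𝓐 → ℝ)
    (D : Fin n → 𝓧 × 𝓐 × ℝ) : ℝ :=
  (∑ t, ixTerm S γ π (D t)) / n

/-- The relative entropy `KL(Q‖P) = ∫ log (dQ/dP) dQ`, as a real number (meaningful whenever
`Q ≪ P` and the log-density is `Q`-integrable, i.e. whenever the KL divergence is finite). -/
noncomputable def klReal {Θ : Type*} [MeasurableSpace Θ] (Q P : Measure Θ) : ℝ :=
  ∫ θ, Real.log ((Q.rnDeriv P θ).toReal) ∂Q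

/-- `KL(Q‖P)` is finite: `Q ≪ P` and the log-density is `Q`-integrable. -/
def KLFinite {Θ : Type*} [MeasurableSpace Θ] (Q P : Measure Θ) : Prop :=
  Q ≪ P ∧ Integrable (fun θ => Real.log ((Q.rnDeriv P θ).toReal)) Q


/-! ### Scalar inequalities -/

lemma exp_neg_le_quadratic {x : ℝ} (hx : 0 ≤ x) : Real.exp (-x) ≤ 1 - x + x ^ 2 / 2 := by
  have h := Real.quadratic_le_exp_of_nonneg hx
  have hpos : 0 < 1 + x + x ^ 2 / 2 := by positivity
  rw [Real.exp_neg]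
  refine (inv_anti₀ hpos h).trans ?_
  rw [inv_le_iff_one_le_mul₀ hpos]
  -- the product is `1 + x ^ 4 / 4`
  nlinarith [sq_nonneg (x ^ 2)]

/-- The implicit-exploration inequality `exp (2γz/(m+γ)) ≤ 1 + 2γz/m`, multiplied by `m` so that
it also makes sense for actions the behavior policy never plays (`m = 0`). It follows from
`2s/(1+s) ≤ log (1+2s)` with `s = γz/m`. -/
lemma mul_exp_ix_le {m γ z : ℝ} (hm : 0 ≤ m) (hγ : 0 < γ) (hz : 0 ≤ z) (hz1 : z ≤ 1) :
    m * Real.exp (2 * γ * (z / (m + γ))) ≤ m + 2 * γ * z := by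
  rcases hm.eq_or_lt with rfl | hm
  · have : 0 ≤ γ * z := by positivity
    linarith
  have hs : 0 ≤ 2 * γ * z / m := by positivity
  have h1 := Real.le_log_one_add_of_nonneg hs
  have h2 : 2 * γ * (z / (m + γ)) ≤ 2 * (2 * γ * z / m) / (2 * γ * z / m + 2) := by
    have e : 2 * (2 * γ * z / m) / (2 * γ * z / m + 2) = 2 * γ * (z / (m + γ * z)) := by
      field_simp
      ring
    rw [e]
    have : γ * z ≤ γ := by nlinarith
    gcongr
  have h3 : Real.exp (2 * γ * (z / (m + γ))) ≤ 1 + 2 * γ * z / m := by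
    rw [← Real.le_log_iff_exp_le (by positivity)]
    exact h2.trans h1
  calc m * Real.exp (2 * γ * (z / (m + γ))) ≤ m * (1 + 2 * γ * z / m) := by gcongr
    _ = m + 2 * γ * z := by field_simp

/-- Second-order bound behind the lower tail of the IX estimator. Of the term
`4γ²z/(m+γ)`, one half is the bias `2γz - 2γmz/(m+γ)` and one half dominates the second moment. -/
lemma mul_exp_neg_ix_le {m γ z : ℝ} (hm : 0 ≤ m) (hγ : 0 < γ) (hz : 0 ≤ z) (hz1 : z ≤ 1) :
    m * Real.exp (-(2 * γ * (z / (m + γ)))) ≤ m + (-(2 * γ * z) + 4 * γ ^ 2 * (z / (m + γ))) := by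
  have h := exp_neg_le_quadratic (x := 2 * γ * (z / (m + γ))) (by positivity)
  refine (mul_le_mul_of_nonneg_left h hm).trans ?_
  have hpos : 0 < m + γ := by positivity
  set y := z / (m + γ) with hy
  have hzy : z = y * (m + γ) := by rw [hy]; field_simp
  have hy0 : 0 ≤ y := by positivity
  have hmy : m * y ≤ 1 := by nlinarith
  have : γ ^ 2 * y * (m * y) ≤ γ ^ 2 * y * 1 := by gcongr
  rw [hzy]
  nlinarith

/-! ### Change of measure and prior mixtures -/

/-- The Donsker–Varadhan inequality for bounded functions: the relative entropy of `Q` with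
respect to the `f`-tilting of `P` is nonnegative. -/
lemma donsker_varadhan {Θ : Type*} [MeasurableSpace Θ] (P Q : Measure Θ)
    [IsProbabilityMeasure P] [IsProbabilityMeasure Q] (hKL : KLFinite Q P)
    {f : Θ → ℝ} (hf : Measurable f) {B : ℝ} (hB : ∀ θ, |f θ| ≤ B) :
    ∫ θ, f θ ∂Q ≤ klReal Q P + Real.log (∫⁻ θ, ENNReal.ofReal (Real.exp (f θ)) ∂P).toReal := by
  have hfQ : Integrable f Q := Integrable.of_bound hf.aestronglyMeasurable B
    (Filter.Eventually.of_forall hB)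
  have hexp : Integrable (fun θ => Real.exp (f θ)) P :=
    Integrable.of_bound hf.exp.aestronglyMeasurable (Real.exp B)
      (Filter.Eventually.of_forall fun θ => by
        rw [Real.norm_eq_abs, Real.abs_exp]
        exact Real.exp_le_exp.2 ((le_abs_self _).trans (hB θ)))
  have hllr : Integrable (llr Q P) Q := hKL.2
  have := isProbabilityMeasure_tilted hexp
  have h0 := InformationTheory.integral_llr_add_sub_measure_univ_nonneg
    (hKL.1.trans (absolutelyContinuous_tilted hexp))
    (integrable_llr_tilted_right hKL.1 hfQ hllr hexp)
  rw [integral_llr_tilted_right hKL.1 hfQ hexp hllr] at h0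
  simp only [probReal_univ] at h0
  rw [← integral_eq_lintegral_of_nonneg_ae
    (Filter.Eventually.of_forall fun θ => (Real.exp_pos _).le) hf.exp.aestronglyMeasurable]
  have : klReal Q P = ∫ θ, llr Q P θ ∂Q := rfl
  linarith

/-- If `E exp Z ≤ 1 + c`, then `E exp (Z - c) ≤ 1`, since `1 + c ≤ exp c`. -/
lemma lintegral_exp_sub_le_one {Ω : Type*} [MeasurableSpace Ω] {μ : Measure Ω} {Z : Ω → ℝ} {c : ℝ}
    (hZ : Measurable Z)
    (h : ∫⁻ ω, ENNReal.ofReal (Real.exp (Z ω)) ∂μ ≤ ENNReal.ofReal (1 + c)) :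
    ∫⁻ ω, ENNReal.ofReal (Real.exp (Z ω - c)) ∂μ ≤ 1 := by
  have hm : Measurable fun ω => ENNReal.ofReal (Real.exp (Z ω)) :=
    ENNReal.measurable_ofReal.comp (Real.measurable_exp.comp hZ)
  have e : ∀ ω, ENNReal.ofReal (Real.exp (Z ω - c)) =
      ENNReal.ofReal (Real.exp (-c)) * ENNReal.ofReal (Real.exp (Z ω)) := fun ω => by
    rw [← ENNReal.ofReal_mul (Real.exp_pos _).le, ← Real.exp_add]
    ring_nf
  simp only [e]
  rw [lintegral_const_mul _ hm]
  calc _ ≤ ENNReal.ofReal (Real.exp (-c)) * ENNReal.ofReal (Real.exp c) := by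
        gcongr
        exact h.trans (ENNReal.ofReal_le_ofReal (by linarith [Real.add_one_le_exp c]))
    _ = 1 := by
        rw [← ENNReal.ofReal_mul (Real.exp_pos _).le, ← Real.exp_add]
        simp

lemma lintegral_pi_prod_eq {Ω : Type*} [MeasurableSpace Ω] (μ : Measure Ω) [IsProbabilityMeasure μ]
    {g : Ω → ENNReal} (hg : Measurable g) (n : ℕ) :
    ∫⁻ D, ∏ t, g (D t) ∂(Measure.pi fun _ : Fin n => μ) = (∫⁻ ω, g ω ∂μ) ^ n := by
  induction n with
  | zero => simp
  | succ n ih =>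
    have hmp := (measurePreserving_piFinSuccAbove (fun _ : Fin (n + 1) => μ) 0).symm
    rw [← hmp.lintegral_comp_emb (MeasurableEquiv.measurableEmbedding _)]
    simp only [MeasurableEquiv.piFinSuccAbove_symm_apply, Fin.prod_univ_succ,
      Fin.insertNthEquiv_apply, Fin.insertNth_zero', Fin.cons_zero, Fin.cons_succ]
    rw [lintegral_prod_mul (f := g) (g := fun D : Fin n → Ω => ∏ t, g (D t)) hg.aemeasurable
      (Finset.measurable_prod _ fun t _ => hg.comp (measurable_pi_apply t)).aemeasurable, ih,
      pow_succ']

/-- The `P`-mixture of the exponential processes `∏ t, exp (φ θ (D t))`. -/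
noncomputable def mixExp {Θ Ω : Type*} [MeasurableSpace Θ] (P : Measure Θ) (φ : Θ → Ω → ℝ)
    {n : ℕ} (D : Fin n → Ω) : ENNReal :=
  ∫⁻ θ, ENNReal.ofReal (Real.exp (∑ t, φ θ (D t))) ∂P

section Mix

variable {Θ Ω : Type*} [MeasurableSpace Θ] [MeasurableSpace Ω]

lemma measurable_mixExp_integrand {φ : Θ → Ω → ℝ} (hφ : Measurable (Function.uncurry φ)) (n : ℕ) :
    Measurable fun q : (Fin n → Ω) × Θ =>
      ENNReal.ofReal (Real.exp (∑ t, φ q.2 (q.1 t))) := by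
  refine ENNReal.measurable_ofReal.comp (Real.measurable_exp.comp ?_)
  refine Finset.measurable_sum _ fun t _ => ?_
  exact hφ.comp (measurable_snd.prodMk ((measurable_pi_apply t).comp measurable_fst))

lemma measurable_mixExp (P : Measure Θ) [IsProbabilityMeasure P] {φ : Θ → Ω → ℝ}
    (hφ : Measurable (Function.uncurry φ)) (n : ℕ) :
    Measurable fun D : Fin n → Ω => mixExp P φ D :=
  (measurable_mixExp_integrand hφ n).lintegral_prod_right'

/-- Mixing over the prior before looking at the data: by Tonelli and independence, the mixture
has expectation at most one as soon as each single exponential moment does. -/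
lemma lintegral_mixExp_le_one (P : Measure Θ) [IsProbabilityMeasure P] (μ : Measure Ω)
    [IsProbabilityMeasure μ] {φ : Θ → Ω → ℝ} (hφ : Measurable (Function.uncurry φ))
    (h1 : ∀ θ, ∫⁻ ω, ENNReal.ofReal (Real.exp (φ θ ω)) ∂μ ≤ 1) (n : ℕ) :
    ∫⁻ D, mixExp P φ D ∂(Measure.pi fun _ : Fin n => μ) ≤ 1 := by
  unfold mixExp
  rw [lintegral_lintegral_swap (measurable_mixExp_integrand hφ n).aemeasurable]
  refine (lintegral_mono (g := fun _ => 1) fun θ => ?_).trans (by simp)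
  have hg : Measurable fun ω => ENNReal.ofReal (Real.exp (φ θ ω)) :=
    ENNReal.measurable_ofReal.comp (Real.measurable_exp.comp (hφ.comp measurable_prodMk_left))
  simp only [Real.exp_sum]
  simp only [ENNReal.ofReal_prod_of_nonneg fun _ _ => (Real.exp_pos _).le]
  rw [lintegral_pi_prod_eq μ hg]
  exact pow_le_one₀ (zero_le) (h1 θ)

lemma mixExp_pos (P : Measure Θ) [IsProbabilityMeasure P] {φ : Θ → Ω → ℝ}
    (hφ : Measurable (Function.uncurry φ)) {n : ℕ} (D : Fin n → Ω) : 0 < mixExp P φ D := by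
  unfold mixExp
  have hm : Measurable fun θ => ENNReal.ofReal (Real.exp (∑ t, φ θ (D t))) :=
    (measurable_mixExp_integrand hφ n).comp measurable_prodMk_left
  rw [lintegral_pos_iff_support hm]
  have : (Function.support fun θ => ENNReal.ofReal (Real.exp (∑ t, φ θ (D t)))) = Set.univ := by
    ext θ
    simp [Real.exp_pos]
  simp [this]

end Mix

/-! ### Moments under the law of one observation -/

section Bandit

variable (S : CBSetup 𝓧 𝓐)

lemma measurable_obsKernel : Measurable fun x => Measure.sum fun a =>
    ENNReal.ofReal (S.μb x a) • (S.rker x a).map fun ρ => (x, a, ρ) := by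
  refine Measure.measurable_of_measurable_coe _ fun s hs => ?_
  simp only [Measure.sum_apply _ hs, tsum_fintype, Measure.smul_apply, smul_eq_mul]
  refine Finset.measurable_sum _ fun a _ => ?_
  refine (ENNReal.measurable_ofReal.comp (S.μb_meas a)).mul ?_
  let κ : Kernel 𝓧 ℝ := ⟨fun x => S.rker x a, S.rker_meas a⟩
  have : IsMarkovKernel κ := ⟨fun x => S.rker_prob x a⟩
  have hs' : MeasurableSet {q : 𝓧 × ℝ | (q.1, a, q.2) ∈ s} :=
    (measurable_fst.prodMk (measurable_const.prodMk measurable_snd)) hs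
  have h := Kernel.measurable_kernel_prodMk_left (κ := κ) hs'
  convert h using 2 with x
  rw [Measure.map_apply (by fun_prop) hs]
  rfl

lemma lintegral_obsLaw {f : 𝓧 × 𝓐 × ℝ → ENNReal} (hf : Measurable f) :
    ∫⁻ ω, f ω ∂(obsLaw S) =
      ∫⁻ x, ∑ a, ENNReal.ofReal (S.μb x a) * ∫⁻ ρ, f (x, a, ρ) ∂(S.rker x a) ∂S.ν := by
  unfold obsLaw
  rw [Measure.lintegral_bind (measurable_obsKernel S).aemeasurable hf.aemeasurable]
  refine lintegral_congr fun x => ?_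
  rw [lintegral_sum_measure, tsum_fintype]
  refine Finset.sum_congr rfl fun a _ => ?_
  rw [lintegral_smul_measure, lintegral_map hf (by fun_prop), smul_eq_mul]

lemma isProbabilityMeasure_obsLaw : IsProbabilityMeasure (obsLaw S) := by
  constructor
  have := S.ν_prob
  have := S.rker_prob
  rw [← lintegral_one, lintegral_obsLaw S measurable_const]
  simp only [lintegral_one, measure_univ, mul_one]
  have : ∀ x, ∑ a, ENNReal.ofReal (S.μb x a) = 1 := fun x => by
    rw [← ENNReal.ofReal_sum_of_nonneg fun a _ => S.μb_nonneg x a, S.μb_sum_one]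
    simp
  simp [this]

lemma rker_ae (x : 𝓧) (a : 𝓐) : ∀ᵐ ρ ∂(S.rker x a), ρ ∈ Set.Icc (0 : ℝ) 1 :=
  S.rker_supp x a

lemma integrable_reward (x : 𝓧) (a : 𝓐) : Integrable (fun ρ : ℝ => ρ) (S.rker x a) := by
  have := S.rker_prob x a
  refine Integrable.of_bound aestronglyMeasurable_id 1 ?_
  filter_upwards [rker_ae S x a] with ρ hρ
  rw [Real.norm_eq_abs, abs_of_nonneg hρ.1]
  exact hρ.2

lemma r_mem (x : 𝓧) (a : 𝓐) : S.r x a ∈ Set.Icc (0 : ℝ) 1 := by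
  have := S.rker_prob x a
  rw [S.r_def]
  constructor
  · exact integral_nonneg_of_ae ((rker_ae S x a).mono fun ρ h => h.1)
  · calc ∫ ρ, ρ ∂(S.rker x a) ≤ ∫ _, (1 : ℝ) ∂(S.rker x a) :=
          integral_mono_ae (integrable_reward S x a) (integrable_const _)
            ((rker_ae S x a).mono fun ρ h => h.2)
      _ = 1 := by simp

/-- Averaging a pointwise bound that is affine in the reward, over reward, action and context.
The importance weight is absorbed by the factor `μb x a`, so no positivity of it is needed. -/
lemma lintegral_obsLaw_le {h : 𝓧 × 𝓐 × ℝ → ℝ} (hh : Measurable h) (hh0 : ∀ ω, 0 ≤ h ω)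
    {g : 𝓧 → 𝓐 → ℝ} (hgi : ∀ a, Integrable (fun x => g x a * S.r x a) S.ν)
    (hle : ∀ x a, ∀ ρ ∈ Set.Icc (0 : ℝ) 1, S.μb x a * h (x, a, ρ) ≤ S.μb x a + g x a * ρ) :
    ∫⁻ ω, ENNReal.ofReal (h ω) ∂(obsLaw S) ≤
      ENNReal.ofReal (1 + ∫ x, ∑ a, g x a * S.r x a ∂S.ν) := by
  have := S.ν_prob
  have hm : Measurable fun ω => ENNReal.ofReal (h ω) := ENNReal.measurable_ofReal.comp hh
  rw [lintegral_obsLaw S hm]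
  have key : ∀ x a, ENNReal.ofReal (S.μb x a) * ∫⁻ ρ, ENNReal.ofReal (h (x, a, ρ)) ∂(S.rker x a)
      ≤ ENNReal.ofReal (S.μb x a + g x a * S.r x a) ∧ 0 ≤ S.μb x a + g x a * S.r x a := by
    intro x a
    have := S.rker_prob x a
    have hint : Integrable (fun ρ => S.μb x a + g x a * ρ) (S.rker x a) :=
      (integrable_const _).add ((integrable_reward S x a).const_mul _)
    have hnn : 0 ≤ᵐ[S.rker x a] fun ρ => S.μb x a + g x a * ρ :=
      (rker_ae S x a).mono fun ρ hρ =>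
        (mul_nonneg (S.μb_nonneg x a) (hh0 _)).trans (hle x a ρ hρ)
    have heq : ∫ ρ, (S.μb x a + g x a * ρ) ∂(S.rker x a) = S.μb x a + g x a * S.r x a := by
      rw [integral_add (integrable_const _) ((integrable_reward S x a).const_mul _),
        integral_const_mul, ← S.r_def]
      simp
    refine ⟨?_, heq ▸ integral_nonneg_of_ae hnn⟩
    rw [← heq, ofReal_integral_eq_lintegral_ofReal hint hnn,
      ← lintegral_const_mul _ (by fun_prop)]
    refine lintegral_mono_ae ((rker_ae S x a).mono fun ρ hρ => ?_)
    rw [← ENNReal.ofReal_mul (S.μb_nonneg x a)]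
    exact ENNReal.ofReal_le_ofReal (hle x a ρ hρ)
  have hsum : ∀ x, ∑ a, (S.μb x a + g x a * S.r x a) = 1 + ∑ a, g x a * S.r x a := fun x => by
    rw [Finset.sum_add_distrib, S.μb_sum_one]
  have hI : Integrable (fun x => ∑ a, g x a * S.r x a) S.ν :=
    integrable_finsetSum _ fun a _ => hgi a
  have e : 1 + ∫ x, ∑ a, g x a * S.r x a ∂S.ν = ∫ x, (1 + ∑ a, g x a * S.r x a) ∂S.ν := by
    rw [integral_add (integrable_const _) hI]
    simp
  have hI1 : Integrable (fun x => 1 + ∑ a, g x a * S.r x a) S.ν := (integrable_const _).add hI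
  rw [e, ofReal_integral_eq_lintegral_ofReal hI1
    (Filter.Eventually.of_forall fun x => by
      simp only [Pi.zero_apply]
      rw [← hsum]; exact Finset.sum_nonneg fun a _ => (key x a).2)]
  refine lintegral_mono fun x => ?_
  rw [← hsum, ENNReal.ofReal_sum_of_nonneg fun a _ => (key x a).2]
  exact Finset.sum_le_sum fun a _ => (key x a).1

lemma IsPolicy.le_one {π : 𝓧 → 𝓐 → ℝ} (hπ : IsPolicy π) (x : 𝓧) (a : 𝓐) : π x a ≤ 1 := by
  rw [← hπ.2.1 x]
  exact Finset.single_le_sum (fun b _ => hπ.1 x b) (Finset.mem_univ a)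

lemma abs_ixTerm_le {γ : ℝ} (hγ : 0 < γ) {π : 𝓧 → 𝓐 → ℝ} (hπ : IsPolicy π) (ω : 𝓧 × 𝓐 × ℝ) :
    |ixTerm S γ π ω| ≤ |ω.2.2| / γ := by
  have hm := S.μb_nonneg ω.1 ω.2.1
  have h0 := hπ.1 ω.1 ω.2.1
  have h1 := hπ.le_one ω.1 ω.2.1
  unfold ixTerm
  rw [abs_div, abs_mul, abs_of_nonneg h0, abs_of_pos (by positivity : 0 < S.μb ω.1 ω.2.1 + γ)]
  gcongr
  · nlinarith [abs_nonneg ω.2.2]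
  · linarith

lemma integrable_policy_reward {π : 𝓧 → 𝓐 → ℝ} (hπ : IsPolicy π) (a : 𝓐) :
    Integrable (fun x => π x a * S.r x a) S.ν := by
  have := S.ν_prob
  refine Integrable.of_bound ((hπ.2.2 a).mul (S.r_meas a)).aestronglyMeasurable 1
    (Filter.Eventually.of_forall fun x => ?_)
  have hr := r_mem S x a
  rw [Real.norm_eq_abs, abs_of_nonneg (mul_nonneg (hπ.1 x a) hr.1)]
  exact mul_le_one₀ (hπ.le_one x a) hr.1 hr.2

lemma integrable_policy_cov {γ : ℝ} (hγ : 0 < γ) {π : 𝓧 → 𝓐 → ℝ} (hπ : IsPolicy π) (a : 𝓐) :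
    Integrable (fun x => π x a * S.r x a / (S.μb x a + γ)) S.ν := by
  have := S.ν_prob
  refine Integrable.of_bound (((hπ.2.2 a).mul (S.r_meas a)).div
    ((S.μb_meas a).add_const γ)).aestronglyMeasurable (1 / γ)
    (Filter.Eventually.of_forall fun x => ?_)
  have hr := r_mem S x a
  have h0 := mul_nonneg (hπ.1 x a) hr.1
  have hm := S.μb_nonneg x a
  rw [Real.norm_eq_abs, abs_of_nonneg (by positivity)]
  gcongr
  · exact mul_le_one₀ (hπ.le_one x a) hr.1 hr.2
  · linarith

lemma sum_policy_reward_mem {π : 𝓧 → 𝓐 → ℝ} (hπ : IsPolicy π) (x : 𝓧) :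
    0 ≤ ∑ a, π x a * S.r x a ∧ ∑ a, π x a * S.r x a ≤ 1 := by
  refine ⟨Finset.sum_nonneg fun a _ => mul_nonneg (hπ.1 x a) (r_mem S x a).1, ?_⟩
  rw [← hπ.2.1 x]
  exact Finset.sum_le_sum fun a _ => mul_le_of_le_one_right (hπ.1 x a) (r_mem S x a).2

lemma abs_pval_le {π : 𝓧 → 𝓐 → ℝ} (hπ : IsPolicy π) : |pval S π| ≤ 1 := by
  have := S.ν_prob
  have h := norm_integral_le_of_norm_le_const (μ := S.ν) (f := fun x => ∑ a, π x a * S.r x a)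
    (C := 1) (Filter.Eventually.of_forall fun x => by
      have := sum_policy_reward_mem S hπ x
      rw [Real.norm_eq_abs, abs_of_nonneg this.1]
      exact this.2)
  simpa [pval] using h

lemma abs_covγ_le {γ : ℝ} (hγ : 0 < γ) {π : 𝓧 → 𝓐 → ℝ} (hπ : IsPolicy π) :
    |covγ S γ π| ≤ 1 / γ := by
  have := S.ν_prob
  have h := norm_integral_le_of_norm_le_const (μ := S.ν)
    (f := fun x => ∑ a, π x a * S.r x a / (S.μb x a + γ))
    (C := 1 / γ) (Filter.Eventually.of_forall fun x => by
      have h1 := sum_policy_reward_mem S hπ x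
      have h0 : ∀ a, 0 ≤ π x a * S.r x a := fun a => mul_nonneg (hπ.1 x a) (r_mem S x a).1
      have hm := S.μb_nonneg x
      rw [Real.norm_eq_abs, abs_of_nonneg (Finset.sum_nonneg fun a _ =>
        div_nonneg (h0 a) (by linarith [hm a]))]
      calc ∑ a, π x a * S.r x a / (S.μb x a + γ) ≤ ∑ a, π x a * S.r x a / γ :=
            Finset.sum_le_sum fun a _ =>
              div_le_div_of_nonneg_left (h0 a) hγ (by linarith [hm a])
        _ = (∑ a, π x a * S.r x a) / γ := by rw [Finset.sum_div]
        _ ≤ 1 / γ := by gcongr; exact h1.2)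
  simpa [covγ] using h

/-- Upper tail: the IX estimator overshoots with exponential moment at scale `2γ` at most one. -/
lemma lintegral_exp_ix_le_one {γ : ℝ} (hγ : 0 < γ) {π : 𝓧 → 𝓐 → ℝ} (hπ : IsPolicy π)
    (hmeas : Measurable (ixTerm S γ π)) :
    ∫⁻ ω, ENNReal.ofReal (Real.exp (2 * γ * (ixTerm S γ π ω - pval S π))) ∂(obsLaw S) ≤ 1 := by
  have hb := lintegral_obsLaw_le S (h := fun ω => Real.exp (2 * γ * ixTerm S γ π ω))
    (Real.measurable_exp.comp (hmeas.const_mul _)) (fun ω => (Real.exp_pos _).le)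
    (g := fun x a => 2 * γ * π x a)
    (fun a => by
      simp only [mul_assoc]
      exact ((integrable_policy_reward S hπ a).const_mul γ).const_mul 2)
    (fun x a ρ hρ => by
      have := mul_exp_ix_le (z := π x a * ρ) (S.μb_nonneg x a) hγ (mul_nonneg (hπ.1 x a) hρ.1)
        (mul_le_one₀ (hπ.le_one x a) hρ.1 hρ.2)
      simpa only [ixTerm, mul_assoc] using this)
  have e : ∫ x, ∑ a, 2 * γ * π x a * S.r x a ∂S.ν = 2 * γ * pval S π := by
    simp only [pval, mul_assoc, ← Finset.mul_sum, integral_const_mul]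
  rw [e] at hb
  have := lintegral_exp_sub_le_one (hmeas.const_mul (2 * γ)) hb
  simpa only [mul_sub] using this

/-- Lower tail: subtracting the bias and variance proxy `2γ C_γ(π)` brings the exponential moment
of the undershoot at scale `2γ` below one. -/
lemma lintegral_exp_neg_ix_le_one {γ : ℝ} (hγ : 0 < γ) {π : 𝓧 → 𝓐 → ℝ} (hπ : IsPolicy π)
    (hmeas : Measurable (ixTerm S γ π)) :
    ∫⁻ ω, ENNReal.ofReal (Real.exp (2 * γ * (pval S π - ixTerm S γ π ω - 2 * γ * covγ S γ π)))
      ∂(obsLaw S) ≤ 1 := by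
  have hb := lintegral_obsLaw_le S (h := fun ω => Real.exp (-(2 * γ * ixTerm S γ π ω)))
    (Real.measurable_exp.comp (hmeas.const_mul _).neg) (fun ω => (Real.exp_pos _).le)
    (g := fun x a => -(2 * γ * π x a) + 4 * γ ^ 2 * (π x a / (S.μb x a + γ)))
    (fun a => by
      refine (((integrable_policy_reward S hπ a).const_mul (-(2 * γ))).add
        ((integrable_policy_cov S hγ hπ a).const_mul (4 * γ ^ 2))).congr
        (Filter.Eventually.of_forall fun x => ?_)
      simp only [Pi.add_apply]
      ring)
    (fun x a ρ hρ => by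
      refine (mul_exp_neg_ix_le (z := π x a * ρ) (S.μb_nonneg x a) hγ
        (mul_nonneg (hπ.1 x a) hρ.1) (mul_le_one₀ (hπ.le_one x a) hρ.1 hρ.2)).trans_eq ?_
      ring)
  have e : ∫ x, ∑ a, (-(2 * γ * π x a) + 4 * γ ^ 2 * (π x a / (S.μb x a + γ))) * S.r x a ∂S.ν
      = -(2 * γ) * pval S π + 4 * γ ^ 2 * covγ S γ π := by
    unfold pval covγ
    rw [← integral_const_mul, ← integral_const_mul, ← integral_add
      ((integrable_finsetSum _ fun a _ => integrable_policy_reward S hπ a).const_mul _)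
      ((integrable_finsetSum _ fun a _ => integrable_policy_cov S hγ hπ a).const_mul _)]
    refine integral_congr_ae (Filter.Eventually.of_forall fun x => ?_)
    simp only [Finset.mul_sum, ← Finset.sum_add_distrib]
    refine Finset.sum_congr rfl fun a _ => ?_
    ring
  rw [e] at hb
  refine le_of_eq_of_le (lintegral_congr fun ω => ?_)
    (lintegral_exp_sub_le_one (hmeas.const_mul (2 * γ)).neg hb)
  congr 2
  simp only [Pi.neg_apply]
  ring

/-! ### Measurability along the policy class -/

section Family

variable {Θ : Type*} [MeasurableSpace Θ] {pf : Θ → 𝓧 → 𝓐 → ℝ}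

lemma measurable_ixTerm (hpfm : ∀ a, Measurable fun q : Θ × 𝓧 => pf q.1 q.2 a) (γ : ℝ) :
    Measurable (Function.uncurry fun θ => ixTerm S γ (pf θ)) := by
  have h : Measurable fun q : 𝓐 × (Θ × 𝓧 × ℝ) =>
      pf q.2.1 q.2.2.1 q.1 * q.2.2.2 / (S.μb q.2.2.1 q.1 + γ) := by
    refine measurable_from_prod_countable_right fun a => ?_
    have h1 : Measurable fun q : Θ × 𝓧 × ℝ => pf q.1 q.2.1 a :=
      (hpfm a).comp (measurable_fst.prodMk (measurable_fst.comp measurable_snd))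
    have h2 : Measurable fun q : Θ × 𝓧 × ℝ => S.μb q.2.1 a :=
      (S.μb_meas a).comp (measurable_fst.comp measurable_snd)
    exact (h1.mul (measurable_snd.comp measurable_snd)).div (h2.add_const γ)
  have hr : Measurable fun q : Θ × 𝓧 × 𝓐 × ℝ => (q.2.2.1, (q.1, q.2.1, q.2.2.2)) := by fun_prop
  exact h.comp hr

lemma measurable_pval (hpfm : ∀ a, Measurable fun q : Θ × 𝓧 => pf q.1 q.2 a) :
    Measurable fun θ => pval S (pf θ) := by
  have := S.ν_prob
  refine (StronglyMeasurable.integral_prod_right (ν := S.ν)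
    (f := fun θ x => ∑ a, pf θ x a * S.r x a) ?_).measurable
  refine Measurable.stronglyMeasurable (Finset.measurable_sum _ fun a _ => ?_)
  exact (hpfm a).mul ((S.r_meas a).comp measurable_snd)

lemma measurable_covγ (hpfm : ∀ a, Measurable fun q : Θ × 𝓧 => pf q.1 q.2 a) (γ : ℝ) :
    Measurable fun θ => covγ S γ (pf θ) := by
  have := S.ν_prob
  refine (StronglyMeasurable.integral_prod_right (ν := S.ν)
    (f := fun θ x => ∑ a, pf θ x a * S.r x a / (S.μb x a + γ)) ?_).measurable
  refine Measurable.stronglyMeasurable (Finset.measurable_sum _ fun a _ => ?_)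
  exact ((hpfm a).mul ((S.r_meas a).comp measurable_snd)).div
    (((S.μb_meas a).comp measurable_snd).add_const γ)

end Family

end Bandit

/-- Theorem 2, first part: with probability at least `1-δ`, the Gibbs
posterior `Qhat D = argmax_Q { ṽ_n(Q) - KL(Q‖P)/(2γn) }` satisfies, simultaneously for every
comparator distribution `Q*` (with finite `KL(Q*‖P)`; distributions of infinite relative
entropy satisfy the claimed bound vacuously),
`v(Q*) - v(Qhat D) ≤ (KL(Q*‖P) + log(1/δ))/(γn) + 2γ C_γ(Q*)`. -/
theorem pac_bayes_piwo_ix_regret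
    (S : CBSetup 𝓧 𝓐) {Θ : Type*} [MeasurableSpace Θ]
    (pf : Θ → 𝓧 → 𝓐 → ℝ) (hpf : ∀ θ, IsPolicy (pf θ))
    (hpfm : ∀ a, Measurable fun q : Θ × 𝓧 => pf q.1 q.2 a)
    {n : ℕ} (hn : 0 < n) (γ δ : ℝ) (hγ : 0 < γ) (hδ0 : 0 < δ) (hδ1 : δ < 1)
    (P : Measure Θ) (hP : IsProbabilityMeasure P)
    (Qhat : (Fin n → 𝓧 × 𝓐 × ℝ) → Measure Θ)
    (hQhat_prob : ∀ D, IsProbabilityMeasure (Qhat D))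
    (hQhat_kl : ∀ D, KLFinite (Qhat D) P)
    (hQhat_max : ∀ D (Q : Measure Θ), IsProbabilityMeasure Q → KLFinite Q P →
      (∫ θ, ixEst S γ (pf θ) D ∂Q) - klReal Q P / (2 * γ * n) ≤
        (∫ θ, ixEst S γ (pf θ) D ∂(Qhat D)) - klReal (Qhat D) P / (2 * γ * n)) :
    ENNReal.ofReal (1 - δ) ≤
      dataLaw S n {D : Fin n → 𝓧 × 𝓐 × ℝ |
        ∀ Q : Measure Θ, IsProbabilityMeasure Q → KLFinite Q P →
          (∫ θ, pval S (pf θ) ∂Q) - (∫ θ, pval S (pf θ) ∂(Qhat D)) ≤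
            (klReal Q P + Real.log (1 / δ)) / (γ * n) +
              2 * γ * ∫ θ, covγ S γ (pf θ) ∂Q} := by
  have := S.ν_prob
  have := isProbabilityMeasure_obsLaw S
  have hn' : (0 : ℝ) < n := by exact_mod_cast hn
  let φ₁ : Θ → 𝓧 × 𝓐 × ℝ → ℝ := fun θ ω => 2 * γ * (ixTerm S γ (pf θ) ω - pval S (pf θ))
  let φ₂ : Θ → 𝓧 × 𝓐 × ℝ → ℝ := fun θ ω =>
    2 * γ * (pval S (pf θ) - ixTerm S γ (pf θ) ω - 2 * γ * covγ S γ (pf θ))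
  have hix := measurable_ixTerm S hpfm γ
  have hv := measurable_pval S hpfm
  have hc := measurable_covγ S hpfm γ
  have hφ₁ : Measurable (Function.uncurry φ₁) :=
    (hix.sub (hv.comp measurable_fst)).const_mul _
  have hφ₂ : Measurable (Function.uncurry φ₂) :=
    (((hv.comp measurable_fst).sub hix).sub ((hc.comp measurable_fst).const_mul _)).const_mul _
  have hixθ : ∀ θ, Measurable (ixTerm S γ (pf θ)) := fun θ => hix.comp measurable_prodMk_left
  have hE₁ := lintegral_mixExp_le_one P (obsLaw S) hφ₁
    (fun θ => lintegral_exp_ix_le_one S hγ (hpf θ) (hixθ θ)) n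
  have hE₂ := lintegral_mixExp_le_one P (obsLaw S) hφ₂
    (fun θ => lintegral_exp_neg_ix_le_one S hγ (hpf θ) (hixθ θ)) n
  have hW₁ := measurable_mixExp P hφ₁ n
  have hW₂ := measurable_mixExp P hφ₂ n
  have : IsProbabilityMeasure (dataLaw S n) := by unfold dataLaw; infer_instance
  -- A single application of Markov's inequality to the sum of both mixtures costs `δ` only once.
  set bad : Set (Fin n → 𝓧 × 𝓐 × ℝ) :=
    {D | ENNReal.ofReal (2 / δ) ≤ mixExp P φ₁ D + mixExp P φ₂ D} with hbad
  have hbad_meas : MeasurableSet bad := measurableSet_le measurable_const (hW₁.add hW₂)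
  have hbad_le : dataLaw S n bad ≤ ENNReal.ofReal δ := by
    have hd : 0 < 2 / δ := by positivity
    refine (meas_ge_le_lintegral_div (hW₁.add hW₂).aemeasurable
      (by simpa using hd) ENNReal.ofReal_ne_top).trans ?_
    simp only [Pi.add_apply]
    rw [lintegral_add_left hW₁]
    refine (ENNReal.div_le_div_right (add_le_add hE₁ hE₂) _).trans_eq ?_
    rw [one_add_one_eq_two, ← ENNReal.ofReal_ofNat 2, ← ENNReal.ofReal_div_of_pos hd]
    congr 1
    field_simp
  have hgood : ENNReal.ofReal (1 - δ) ≤ dataLaw S n badᶜ := by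
    rw [prob_compl_eq_one_sub hbad_meas, ENNReal.ofReal_sub _ hδ0.le, ENNReal.ofReal_one]
    exact tsub_le_tsub_left hbad_le 1
  refine hgood.trans (measure_mono fun D hD Q hQ hKL => ?_)
  have hlt : mixExp P φ₁ D + mixExp P φ₂ D < ENNReal.ofReal (2 / δ) := not_le.1 hD
  have hfin₁ : mixExp P φ₁ D ≠ ⊤ := ne_top_of_lt (le_self_add.trans_lt hlt)
  have hfin₂ : mixExp P φ₂ D ≠ ⊤ := ne_top_of_lt (le_add_self.trans_lt hlt)
  -- By AM–GM the product of the two mixtures is at most `(1 / δ) ^ 2`.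
  have hlog : Real.log (mixExp P φ₁ D).toReal + Real.log (mixExp P φ₂ D).toReal ≤
      2 * Real.log (1 / δ) := by
    have hp₁ := ENNReal.toReal_pos (mixExp_pos P hφ₁ D).ne' hfin₁
    have hp₂ := ENNReal.toReal_pos (mixExp_pos P hφ₂ D).ne' hfin₂
    have hs := ENNReal.toReal_mono ENNReal.ofReal_ne_top hlt.le
    rw [ENNReal.toReal_add hfin₁ hfin₂, ENNReal.toReal_ofReal (by positivity)] at hs
    set w₁ := (mixExp P φ₁ D).toReal
    set w₂ := (mixExp P φ₂ D).toReal
    rw [← Real.log_mul hp₁.ne' hp₂.ne']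
    have h2 : 2 * Real.log (1 / δ) = Real.log ((1 / δ) ^ 2) := by
      rw [Real.log_pow]; norm_num
    rw [h2]
    refine Real.log_le_log (by positivity) ?_
    have e : 2 / δ = 2 * (1 / δ) := by ring
    rw [e] at hs
    nlinarith [sq_nonneg (w₁ - w₂)]
  have := hQhat_prob D
  have hbv : ∀ θ, |pval S (pf θ)| ≤ 1 := fun θ => abs_pval_le S (hpf θ)
  have hbc : ∀ θ, |covγ S γ (pf θ)| ≤ 1 / γ := fun θ => abs_covγ_le S hγ (hpf θ)
  let B : ℝ := (∑ t, |(D t).2.2| / γ) / n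
  have hbe : ∀ θ, |ixEst S γ (pf θ) D| ≤ B := fun θ => by
    unfold ixEst
    rw [abs_div, abs_of_pos hn']
    refine div_le_div_of_nonneg_right ?_ hn'.le
    exact (Finset.abs_sum_le_sum_abs _ _).trans
      (Finset.sum_le_sum fun t _ => abs_ixTerm_le S hγ (hpf θ) (D t))
  have hme : Measurable fun θ => ixEst S γ (pf θ) D :=
    (Finset.measurable_sum _ fun t _ => hix.comp measurable_prodMk_right).div_const _
  have hiv : ∀ Q' : Measure Θ, IsProbabilityMeasure Q' →
      Integrable (fun θ => pval S (pf θ)) Q' := fun Q' _ =>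
    Integrable.of_bound hv.aestronglyMeasurable 1 (Filter.Eventually.of_forall hbv)
  have hic : Integrable (fun θ => covγ S γ (pf θ)) Q :=
    Integrable.of_bound hc.aestronglyMeasurable (1 / γ) (Filter.Eventually.of_forall hbc)
  have hie : ∀ Q' : Measure Θ, IsProbabilityMeasure Q' →
      Integrable (fun θ => ixEst S γ (pf θ) D) Q' := fun Q' _ =>
    Integrable.of_bound hme.aestronglyMeasurable B (Filter.Eventually.of_forall hbe)
  have hsum₁ : ∀ θ, ∑ t, φ₁ θ (D t) = 2 * γ * n * (ixEst S γ (pf θ) D - pval S (pf θ)) :=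
    fun θ => by
      simp only [φ₁, ixEst, ← Finset.mul_sum, Finset.sum_sub_distrib, Finset.sum_const,
        Finset.card_univ, Fintype.card_fin, nsmul_eq_mul]
      field_simp
  have hsum₂ : ∀ θ, ∑ t, φ₂ θ (D t) =
      2 * γ * n * (pval S (pf θ) - ixEst S γ (pf θ) D - 2 * γ * covγ S γ (pf θ)) :=
    fun θ => by
      simp only [φ₂, ixEst, ← Finset.mul_sum, Finset.sum_sub_distrib, Finset.sum_const,
        Finset.card_univ, Fintype.card_fin, nsmul_eq_mul]
      field_simp
  have hDV₁ := donsker_varadhan P (Qhat D) (hQhat_kl D)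
    (f := fun θ => 2 * γ * n * (ixEst S γ (pf θ) D - pval S (pf θ)))
    ((hme.sub hv).const_mul _) (B := 2 * γ * n * (B + 1)) (fun θ => by
      rw [abs_mul, abs_of_pos (by positivity)]
      have := abs_sub (ixEst S γ (pf θ) D) (pval S (pf θ))
      have := hbe θ
      have := hbv θ
      gcongr
      linarith)
  have hDV₂ := donsker_varadhan P Q hKL
    (f := fun θ => 2 * γ * n * (pval S (pf θ) - ixEst S γ (pf θ) D - 2 * γ * covγ S γ (pf θ)))
    (((hv.sub hme).sub (hc.const_mul _)).const_mul _)
    (B := 2 * γ * n * (1 + B + 2 * γ * (1 / γ))) (fun θ => by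
      rw [abs_mul, abs_of_pos (by positivity)]
      have := abs_sub (pval S (pf θ) - ixEst S γ (pf θ) D) (2 * γ * covγ S γ (pf θ))
      have := abs_sub (pval S (pf θ)) (ixEst S γ (pf θ) D)
      have := hbe θ
      have := hbv θ
      have h5 : |2 * γ * covγ S γ (pf θ)| ≤ 2 * γ * (1 / γ) := by
        rw [abs_mul, abs_of_pos (by positivity : 0 < 2 * γ)]
        exact mul_le_mul_of_nonneg_left (hbc θ) (by positivity)
      gcongr
      linarith)
  have hw₁ : ∫⁻ θ, ENNReal.ofReal (Real.exp (2 * γ * n * (ixEst S γ (pf θ) D - pval S (pf θ)))) ∂P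
      = mixExp P φ₁ D := by simp only [mixExp, hsum₁]
  have hw₂ : ∫⁻ θ, ENNReal.ofReal (Real.exp (2 * γ * n *
      (pval S (pf θ) - ixEst S γ (pf θ) D - 2 * γ * covγ S γ (pf θ)))) ∂P
      = mixExp P φ₂ D := by simp only [mixExp, hsum₂]
  rw [hw₁, integral_const_mul, integral_sub (hie _ inferInstance) (hiv _ inferInstance)] at hDV₁
  have hid : Integrable (fun θ => pval S (pf θ) - ixEst S γ (pf θ) D) Q :=
    (hiv Q hQ).sub (hie Q hQ)
  rw [hw₂, integral_const_mul, integral_sub hid (hic.const_mul _),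
    integral_sub (hiv Q hQ) (hie Q hQ), integral_const_mul] at hDV₂
  have hmax := hQhat_max D Q hQ hKL
  have hN : 0 < 2 * γ * n := by positivity
  set N := 2 * γ * n with hNdef
  have hmax' : N * (∫ θ, ixEst S γ (pf θ) D ∂Q) - klReal Q P ≤
      N * (∫ θ, ixEst S γ (pf θ) D ∂(Qhat D)) - klReal (Qhat D) P := by
    have := mul_le_mul_of_nonneg_left hmax hN.le
    rwa [mul_sub, mul_sub, mul_div_cancel₀ _ hN.ne', mul_div_cancel₀ _ hN.ne'] at this
  have e : (klReal Q P + Real.log (1 / δ)) / (γ * n) =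
      (2 * klReal Q P + 2 * Real.log (1 / δ)) / N := by
    rw [hNdef]; field_simp
  rw [e, ← sub_le_iff_le_add, le_div_iff₀ hN]
  nlinarith
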